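/- Let $S \subseteq \mathbb{F}_2^m$ be a subspace, $\Delta \in \mathbb{F}_2^m \setminus S$, $x, z \in \mathbb{F}_2^m$, $\widehat{S} := (S_{\Delta})^{\perp}$, and $\widehat{\Delta} \in S^{\perp}$ with $\langle \Delta, \widehat{\Delta}\rangle = 1$. Let $U := X^x Z^z$ and let $\mathrm{Enc} : \mathbb{C}^2 \to \mathbb{C}^{\mathbb{F}_2^m}$ be the linear isometry with $\mathrm{Enc}\,|b\rangle = U\,|S + b\Delta\rangle$ for $b \in \{0,1\}$. For $\theta \in \{0,1\}$ and $f : \{0,1\} \to \{0,1\}$ define the projector $D_{\theta,f} := \sum_{b : f(b)=1} \Pi[S + b\Delta + x]$ if $\theta = 0$, and $D_{\theta,f} := \sum_{b : f(b)=1} \Pi[\widehat{S} + b\widehat{\Delta} + z]$ if $\theta = 1$. Then $\mathrm{Enc}^{\dagger}\,(H^{\otimes m})^{\theta}\, D_{\theta,f}\, (H^{\otimes m})^{\theta}\,\mathrm{Enc} \;=\; H_2^{\theta}\Big(\sum_{b : f(b)=1}|b\rangle\langle b|\Big)H_2^{\theta}$, where $H_2 = \tfrac{1}{\sqrt{2}}\begin{pmatrix}1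 & 1\\ 1 & -1\end{pmatrix}$ is the single-qubit Hadamard. -/

import Mathlib

open scoped Classical Matrix

noncomputable section

/-- The vector space `𝔽₂^m`. -/
abbrev Vec (m : ℕ) := Fin m → ZMod 2

/-- The bilinear form `⟨v,w⟩ = ∑ᵢ vᵢ wᵢ ∈ 𝔽₂`. -/
def bform {m : ℕ} (v w : Vec m) : ZMod 2 := ∑ i, v i * w i

/-- The sign `(-1)^{⟨v,w⟩} ∈ ℂ`. -/
def sgn {m : ℕ} (v w : Vec m) : ℂ := (-1 : ℂ) ^ (bform v w).val

/-- The Pauli-X unitary `X^x : |v⟩ ↦ |v + x⟩`, as a matrix. -/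
def Xop {m : ℕ} (x : Vec m) : Matrix (Vec m) (Vec m) ℂ :=
  Matrix.of fun a b => if a = b + x then 1 else 0

/-- The Pauli-Z unitary `Z^z : |v⟩ ↦ (-1)^{⟨z,v⟩} |v⟩`, as a matrix. -/
def Zop {m : ℕ} (z : Vec m) : Matrix (Vec m) (Vec m) ℂ :=
  Matrix.diagonal fun v => sgn z v

/-- The `m`-fold Hadamard transform, with entries `(H^{⊗m})_{w,v} = 2^{-m/2} (-1)^{⟨v,w⟩}`. -/
def Had (m : ℕ) : Matrix (Vec m) (Vec m) ℂ :=
  Matrix.of fun w v => (((Real.sqrt (2 ^ m))⁻¹ : ℝ) : ℂ) * sgn v w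

/-- The projector `Π[A] = ∑_{v ∈ A} |v⟩⟨v|`. -/
def proj {m : ℕ} (A : Set (Vec m)) : Matrix (Vec m) (Vec m) ℂ :=
  Matrix.of fun a b => if a = b ∧ a ∈ A then 1 else 0

/-- The normalized coset state `|A + t⟩ = |A|^{-1/2} ∑_{v ∈ A + t} |v⟩`, as a vector of
amplitudes. -/
def cosetState {m : ℕ} (A : Set (Vec m)) (t : Vec m) : Vec m → ℂ :=
  fun v => if v ∈ (· + t) '' A then (((Real.sqrt (Nat.card A))⁻¹ : ℝ) : ℂ) else 0

/-- The dual `A^⊥ = {w : ⟨v,w⟩ = 0 for all v ∈ A}`. -/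
def perp {m : ℕ} (A : Set (Vec m)) : Set (Vec m) := {w | ∀ v ∈ A, bform v w = 0}

/-- `S_Δ = S ∪ (S + Δ)`. -/
def SDelta {m : ℕ} (S : Submodule (ZMod 2) (Vec m)) (Δ : Vec m) : Set (Vec m) :=
  (S : Set (Vec m)) ∪ ((· + Δ) '' (S : Set (Vec m)))

/-- The rank-one projector `|ψ⟩⟨ψ|`. -/
def outer {m : ℕ} (ψ : Vec m → ℂ) : Matrix (Vec m) (Vec m) ℂ :=
  Matrix.of fun a b => ψ a * star (ψ b)

end

section

variable {m : ℕ}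

lemma vec_add_self (v : Vec m) : v + v = 0 :=
  funext fun i => CharTwo.add_self_eq_zero (v i)

lemma vec_add_add_cancel (v t : Vec m) : v + t + t = v := by
  rw [add_assoc, vec_add_self, add_zero]

lemma mem_image_add_iff (A : Set (Vec m)) (v t : Vec m) : v ∈ (· + t) '' A ↔ v + t ∈ A := by
  constructor
  · rintro ⟨a, ha, rfl⟩
    simpa only [vec_add_add_cancel] using ha
  · exact fun h => ⟨v + t, h, vec_add_add_cancel v t⟩

lemma bform_comm (v w : Vec m) : bform v w = bform w v := by
  simp only [bform, mul_comm]

lemma bform_add_left (u v w : Vec m) : bform (u + v) w = bform u w + bform v w := by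
  simp [bform, add_mul, Finset.sum_add_distrib]

lemma bform_add_right (u v w : Vec m) : bform u (v + w) = bform u v + bform u w := by
  rw [bform_comm, bform_add_left, bform_comm v, bform_comm w]

lemma bform_smul_left (a : ZMod 2) (v w : Vec m) : bform (a • v) w = a * bform v w := by
  simp [bform, Finset.mul_sum, mul_assoc]

lemma bform_smul_right (a : ZMod 2) (v w : Vec m) : bform v (a • w) = a * bform v w := by
  rw [bform_comm, bform_smul_left, bform_comm]

lemma neg_one_pow_val_add (a b : ZMod 2) :
    (-1 : ℂ) ^ (a + b).val = (-1) ^ a.val * (-1) ^ b.val := by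
  rw [ZMod.val_add, ← pow_add, ← neg_one_pow_eq_pow_mod_two]

lemma sgn_comm (v w : Vec m) : sgn v w = sgn w v := by
  rw [sgn, bform_comm, sgn]

lemma sgn_add_left (u v w : Vec m) : sgn (u + v) w = sgn u w * sgn v w := by
  rw [sgn, bform_add_left, neg_one_pow_val_add, sgn, sgn]

lemma sgn_add_right (u v w : Vec m) : sgn u (v + w) = sgn u v * sgn u w := by
  rw [sgn_comm, sgn_add_left, sgn_comm v, sgn_comm w]

lemma sgn_mul_self (v w : Vec m) : sgn v w * sgn v w = 1 := by
  rw [sgn, ← mul_pow]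
  simp

lemma star_sgn (v w : Vec m) : star (sgn v w) = sgn v w := by
  simp [sgn]

lemma sgn_eq_one_of_bform_eq_zero {v w : Vec m} (h : bform v w = 0) : sgn v w = 1 := by
  simp [sgn, h]

lemma sgn_eq_neg_one_of_bform_ne_zero {v w : Vec m} (h : bform v w ≠ 0) : sgn v w = -1 := by
  have hone : bform v w = 1 := Fin.eq_one_of_ne_zero _ h
  simp [sgn, hone, ZMod.val_one]

/-- Orthogonality of characters on a subspace. -/
lemma sum_sgn_submodule (S : Submodule (ZMod 2) (Vec m)) (w : Vec m) :
    ∑ s : S, sgn (s : Vec m) w = if w ∈ perp (S : Set (Vec m)) then (Nat.card S : ℂ) else 0 := by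
  split_ifs with h
  · rw [Finset.sum_congr rfl fun (s : S) _ => sgn_eq_one_of_bform_eq_zero (h s s.2)]
    simp
  · obtain ⟨t, ht, hne⟩ : ∃ t ∈ S, bform t w ≠ 0 := by
      simpa [perp] using h
    have hshift : ∑ s : S, sgn ((s + ⟨t, ht⟩ : S) : Vec m) w = ∑ s : S, sgn (s : Vec m) w :=
      Equiv.sum_comp (Equiv.addRight (⟨t, ht⟩ : S)) fun s : S => sgn (s : Vec m) w
    simp only [Submodule.coe_add, sgn_add_left, sgn_eq_neg_one_of_bform_ne_zero hne,
      mul_neg_one, Finset.sum_neg_distrib] at hshift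
    exact self_eq_neg.mp hshift.symm

lemma sum_sgn_univ (v : Vec m) : ∑ w, sgn v w = if v = 0 then (2 : ℂ) ^ m else 0 := by
  split_ifs with h
  · simp [h, sgn, bform, ZMod.card]
  · obtain ⟨t, hne⟩ : ∃ t, bform v t ≠ 0 := by
      obtain ⟨i, hi⟩ := Function.ne_iff.mp h
      exact ⟨Pi.single i 1, by simpa [bform, Pi.single_apply] using hi⟩
    have hshift : ∑ w, sgn v (w + t) = ∑ w, sgn v w :=
      Equiv.sum_comp (Equiv.addRight t) fun w => sgn v w
    simp only [sgn_add_right, sgn_eq_neg_one_of_bform_ne_zero hne, mul_neg_one,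
      Finset.sum_neg_distrib] at hshift
    exact self_eq_neg.mp hshift.symm

lemma mem_perp_SDelta_iff (S : Submodule (ZMod 2) (Vec m)) (Δ w : Vec m) :
    w ∈ perp (SDelta S Δ) ↔ w ∈ perp (S : Set (Vec m)) ∧ bform Δ w = 0 := by
  constructor
  · refine fun h => ⟨fun v hv => h v (Or.inl hv), h Δ (Or.inr ⟨0, S.zero_mem, zero_add Δ⟩)⟩
  · rintro ⟨hS, hd⟩ v (hv | ⟨s, hs, rfl⟩)
    · exact hS v hv
    · rw [bform_add_left, hS s hs, hd, add_zero]

/-- `|S| |Ŝ| = 2^(m-1)`, in the division-free form `2 |S| |Ŝ| = 2^m`. -/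
lemma two_mul_card_mul_card_perp_SDelta (S : Submodule (ZMod 2) (Vec m)) {Δ : Vec m}
    (hΔ : Δ ∉ S) :
    2 * (Nat.card S : ℂ) * (Nat.card (perp (SDelta S Δ)) : ℂ) = 2 ^ m := by
  have hcard : (Nat.card (perp (SDelta S Δ)) : ℂ)
      = ∑ w, if w ∈ perp (SDelta S Δ) then (1 : ℂ) else 0 := by
    rw [Finset.sum_boole, Nat.card_eq_fintype_card, Fintype.card_subtype]
  have hterm (w : Vec m) : 2 * (Nat.card S : ℂ) * (if w ∈ perp (SDelta S Δ) then (1 : ℂ) else 0)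
      = ∑ s : S, (sgn (s : Vec m) w + sgn ((s : Vec m) + Δ) w) := by
    simp only [sgn_add_left, Finset.sum_add_distrib, ← Finset.sum_mul, sum_sgn_submodule,
      mem_perp_SDelta_iff]
    by_cases hS : w ∈ perp (S : Set (Vec m)) <;> by_cases hd : bform Δ w = 0
    · simp [hS, hd, sgn_eq_one_of_bform_eq_zero hd]
      ring
    · simp [hS, hd, sgn_eq_neg_one_of_bform_ne_zero hd]
    · simp [hS]
    · simp [hS]
  have hne (s : S) : (s : Vec m) + Δ ≠ 0 := fun h => hΔ <| by
    have : Δ = s := by rw [← vec_add_add_cancel Δ s, add_comm Δ, h, zero_add]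
    exact this ▸ s.2
  rw [hcard, Finset.mul_sum, Finset.sum_congr rfl fun w _ => hterm w, Finset.sum_comm]
  simp [Finset.sum_add_distrib, sum_sgn_univ, hne]

lemma card_image_add (A : Set (Vec m)) (t : Vec m) : Nat.card ((· + t) '' A) = Nat.card A :=
  Nat.card_image_of_injective (add_left_injective t) A

/-- If on each set `A b` the columns of `M` are, up to a phase, the row `G b`, and the sets `A b`
all have `N` elements, then compressing `∑ b ∈ B, Π[A b]` by `M` yields `N • Gᴴ 1_B G`. -/
lemma conjTranspose_mul_sum_proj_mul {ι κ : Type*} [Fintype κ] [DecidableEq κ]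
    (M : Matrix (Vec m) ι ℂ) (G : Matrix κ ι ℂ) (A : κ → Set (Vec m)) (u : Vec m → ℂ) (N : ℕ)
    (P : κ → Prop) [DecidablePred P]
    (hu : ∀ v, star (u v) * u v = 1) (hM : ∀ b, ∀ v ∈ A b, ∀ i, M v i = u v * G b i)
    (hA : ∀ b, Nat.card (A b) = N) :
    Mᴴ * (∑ b ∈ Finset.univ.filter P, proj (A b)) * M
      = (N : ℂ) • (Gᴴ * Matrix.diagonal (fun b => if P b then (1 : ℂ) else 0) * G) := by
  have hproj (b : κ) : proj (A b) = Matrix.diagonal fun v => if v ∈ A b then (1 : ℂ) else 0 := by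
    ext v w
    by_cases h : v = w <;> simp [proj, h]
  have hone (b : κ) (i j : ι) :
      (Mᴴ * proj (A b) * M) i j = N * (star (G b i) * G b j) := by
    have hcard : (N : ℂ) = ∑ v, if v ∈ A b then (1 : ℂ) else 0 := by
      rw [Finset.sum_boole, ← hA b, Nat.card_eq_fintype_card, Fintype.card_subtype]
    rw [hproj, Matrix.mul_apply, hcard, Finset.sum_mul]
    refine Finset.sum_congr rfl fun v _ => ?_
    rw [Matrix.mul_diagonal, Matrix.conjTranspose_apply]
    split_ifs with h
    · rw [hM b v h, hM b v h, star_mul']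
      linear_combination star (G b i) * G b j * hu v
    · simp
  ext i j
  rw [Matrix.mul_sum, Matrix.sum_mul, Matrix.sum_apply, Finset.sum_congr rfl fun b _ => hone b i j,
    Matrix.smul_apply, Matrix.mul_apply, smul_eq_mul, Finset.mul_sum, Finset.sum_filter]
  refine Finset.sum_congr rfl fun b _ => ?_
  rw [Matrix.mul_diagonal, Matrix.conjTranspose_apply]
  split_ifs <;> simp

lemma Xop_mul_Zop_mulVec (x z : Vec m) (ψ : Vec m → ℂ) (v : Vec m) :
    (Xop x * Zop z).mulVec ψ v = sgn z (v + x) * ψ (v + x) := by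
  have hiff (w : Vec m) : v = w + x ↔ w = v + x :=
    ⟨fun h => by rw [h, vec_add_add_cancel], fun h => by rw [h, vec_add_add_cancel]⟩
  simp [Xop, Zop, Matrix.mulVec, dotProduct, Matrix.mul_diagonal, hiff]

lemma Had_conjTranspose : (Had m)ᴴ = Had m := by
  ext v w
  rw [Matrix.conjTranspose_apply, Had, Matrix.of_apply, Matrix.of_apply, star_mul', star_sgn,
    sgn_comm]
  simp

lemma Had_mulVec_pauli_cosetState (S : Submodule (ZMod 2) (Vec m)) (x z t w : Vec m) :
    (Had m).mulVec ((Xop x * Zop z).mulVec (cosetState (S : Set (Vec m)) t)) w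
      = if w + z ∈ perp (S : Set (Vec m)) then
          (((Real.sqrt (2 ^ m))⁻¹ * Real.sqrt (Nat.card S) : ℝ) : ℂ) * sgn x w * sgn t (w + z)
        else 0 := by
  have hinv : (Nat.card S : ℂ) * (((Real.sqrt (Nat.card S))⁻¹ : ℝ) : ℂ)
      = ((Real.sqrt (Nat.card S) : ℝ) : ℂ) := by
    rw [← Complex.ofReal_natCast, ← Complex.ofReal_mul, ← div_eq_mul_inv, Real.div_sqrt]
  have hshift : (Had m).mulVec ((Xop x * Zop z).mulVec (cosetState (S : Set (Vec m)) t)) w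
      = ∑ s, Had m w (s + (t + x)) * (sgn z (s + t) * cosetState (S : Set (Vec m)) t (s + t)) := by
    rw [Matrix.mulVec, dotProduct, ← Equiv.sum_comp (Equiv.addRight (t + x))]
    refine Finset.sum_congr rfl fun s _ => ?_
    simp only [Xop_mul_Zop_mulVec, Equiv.coe_addRight, ← add_assoc, vec_add_add_cancel]
  have hterm (s : Vec m) :
      Had m w (s + (t + x)) * (sgn z (s + t) * cosetState (S : Set (Vec m)) t (s + t))
        = if s ∈ S then (((Real.sqrt (2 ^ m))⁻¹ : ℝ) : ℂ) * (((Real.sqrt (Nat.card S))⁻¹ : ℝ) : ℂ)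
            * sgn x w * sgn t (w + z) * sgn s (w + z) else 0 := by
    simp only [cosetState, mem_image_add_iff, vec_add_add_cancel, SetLike.mem_coe, Had,
      Matrix.of_apply]
    split_ifs
    · simp only [sgn_add_left, sgn_add_right, sgn_comm z, SetLike.coe_sort_coe]
      ring
    · simp
  rw [hshift, Finset.sum_congr rfl fun s _ => hterm s, ← Finset.sum_filter,
    Finset.sum_subtype (p := (· ∈ S)) _ (by simp), ← Finset.mul_sum, sum_sgn_submodule]
  split_ifs
  · rw [Complex.ofReal_mul, ← hinv]
    ring
  · simp

end


/-- **Single-qubit coset-state authentication correctness.** Decoding an encoded qubit with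
the classical decoder (applied coherently in basis `θ`) implements exactly the logical ZX
measurement `M[θ, f] = H₂^θ (∑_{b : f(b)=1} |b⟩⟨b|) H₂^θ` on the underlying qubit:
`Enc† (H^{⊗m})^θ D_{θ,f} (H^{⊗m})^θ Enc = H₂^θ (∑_{b : f(b)=1} |b⟩⟨b|) H₂^θ`. -/
theorem csa_decoding_correctness {m : ℕ} (hm : 1 ≤ m)
    (S : Submodule (ZMod 2) (Vec m)) (Δ : Vec m) (hΔ : Δ ∉ S) (x z : Vec m)
    (Δhat : Vec m) (hΔhat : Δhat ∈ perp (S : Set (Vec m))) (hpair : bform Δ Δhat = 1)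
    (θ : Fin 2) (f : Fin 2 → Fin 2)
    (U : Matrix (Vec m) (Vec m) ℂ) (hU : U = Xop x * Zop z)
    (Enc : Matrix (Vec m) (Fin 2) ℂ)
    (hEnc : ∀ v b, Enc v b = U.mulVec (cosetState (S : Set (Vec m)) ((b.val : ZMod 2) • Δ)) v)
    (D : Matrix (Vec m) (Vec m) ℂ)
    (hD : D = if θ = 0 then
        ∑ b ∈ Finset.univ.filter (fun b : Fin 2 => f b = 1),
          proj ((· + ((b.val : ZMod 2) • Δ + x)) '' (S : Set (Vec m)))
      else
        ∑ b ∈ Finset.univ.filter (fun b : Fin 2 => f b = 1),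
          proj ((· + ((b.val : ZMod 2) • Δhat + z)) '' perp (SDelta S Δ)))
    (H2 : Matrix (Fin 2) (Fin 2) ℂ)
    (hH2 : ∀ i j : Fin 2, H2 i j = (((Real.sqrt 2)⁻¹ : ℝ) : ℂ) * (-1 : ℂ) ^ (i.val * j.val)) :
    Encᴴ * (Had m) ^ θ.val * D * (Had m) ^ θ.val * Enc
      = H2 ^ θ.val * Matrix.diagonal (fun b : Fin 2 => if f b = 1 then (1 : ℂ) else 0)
          * H2 ^ θ.val := by
  subst hU
  have hphase (v w : Vec m) : star (sgn v w) * sgn v w = 1 := by rw [star_sgn, sgn_mul_self]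
  obtain rfl | rfl : θ = 0 ∨ θ = 1 := by omega
  · have hcol (b : Fin 2) (v : Vec m)
        (hv : v ∈ (· + ((b.val : ZMod 2) • Δ + x)) '' (S : Set (Vec m))) (i : Fin 2) :
        Enc v i = sgn z (v + x)
          * ((((Real.sqrt (Nat.card S))⁻¹ : ℝ) : ℂ) • (1 : Matrix (Fin 2) (Fin 2) ℂ)) b i := by
      rw [mem_image_add_iff, SetLike.mem_coe] at hv
      have hmem : v + x + (i.val : ZMod 2) • Δ ∈ S ↔ b = i := by
        have hdiff : v + x + (i.val : ZMod 2) • Δ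
            = (v + ((b.val : ZMod 2) • Δ + x)) + ((b.val : ZMod 2) + (i.val : ZMod 2)) • Δ := by
          rw [add_smul]
          linear_combination (norm := module) -vec_add_self ((b.val : ZMod 2) • Δ)
        rw [hdiff, Submodule.add_mem_iff_right S hv]
        fin_cases b <;> fin_cases i <;> simp [hΔ, CharTwo.add_self_eq_zero]
      rw [hEnc, Xop_mul_Zop_mulVec, cosetState, Matrix.smul_apply, Matrix.one_apply]
      simp only [mem_image_add_iff, SetLike.mem_coe, hmem]
      split_ifs <;> simp
    have hmain := conjTranspose_mul_sum_proj_mul Enc _ _ _ (Nat.card S) (fun b => f b = 1)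
      (fun v => hphase z (v + x)) hcol fun b => card_image_add _ _
    have hpos : (0 : ℝ) < Nat.card S := by exact_mod_cast Nat.card_pos
    have hscal : (Nat.card S : ℂ) * ((((Real.sqrt (Nat.card S))⁻¹ : ℝ) : ℂ)
        * (((Real.sqrt (Nat.card S))⁻¹ : ℝ) : ℂ)) = 1 := by
      rw [← Complex.ofReal_mul, ← mul_inv, Real.mul_self_sqrt hpos.le, ← Complex.ofReal_natCast,
        ← Complex.ofReal_mul, mul_inv_cancel₀ hpos.ne', Complex.ofReal_one]
    rw [if_pos rfl] at hD
    rw [← hD] at hmain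
    simp only [Fin.val_zero, pow_zero, Matrix.mul_one, Matrix.one_mul]
    rw [hmain]
    simp only [Matrix.conjTranspose_smul, Matrix.conjTranspose_one, Matrix.smul_mul,
      Matrix.mul_smul, Matrix.one_mul, Matrix.mul_one, smul_smul, Complex.star_def, Complex.conj_ofReal]
    rw [hscal, one_smul]
  · have hcol (b : Fin 2) (w : Vec m)
        (hw : w ∈ (· + ((b.val : ZMod 2) • Δhat + z)) '' perp (SDelta S Δ)) (i : Fin 2) :
        (Had m * Enc) w i = sgn x w
          * ((((Real.sqrt (2 ^ m))⁻¹ * Real.sqrt (Nat.card S) * Real.sqrt 2 : ℝ) : ℂ) • H2) b i := by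
      obtain ⟨r, hr, rfl⟩ := hw
      obtain ⟨hrS, hrΔ⟩ := (mem_perp_SDelta_iff S Δ r).mp hr
      have hwz : r + ((b.val : ZMod 2) • Δhat + z) + z = r + (b.val : ZMod 2) • Δhat := by
        rw [← add_assoc, vec_add_add_cancel]
      have hperp : r + (b.val : ZMod 2) • Δhat ∈ perp (S : Set (Vec m)) := fun s hs => by
        rw [bform_add_right, bform_smul_right, hrS s hs, hΔhat s hs, mul_zero, add_zero]
      have hsgn : sgn ((i.val : ZMod 2) • Δ) (r + (b.val : ZMod 2) • Δhat)
          = (-1) ^ (b.val * i.val) := by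
        rw [sgn, bform_smul_left, bform_add_right, bform_smul_right, hrΔ, hpair]
        fin_cases b <;> fin_cases i <;> simp [ZMod.val_one]
      have hEncCol : (fun v => Enc v i)
          = (Xop x * Zop z).mulVec (cosetState (S : Set (Vec m)) ((i.val : ZMod 2) • Δ)) :=
        funext fun v => hEnc v i
      have hHad := Had_mulVec_pauli_cosetState S x z ((i.val : ZMod 2) • Δ)
        (r + ((b.val : ZMod 2) • Δhat + z))
      rw [hwz, if_pos hperp, hsgn, ← hEncCol] at hHad
      refine hHad.trans ?_
      have h2 : ((Real.sqrt 2 : ℝ) : ℂ) * (((Real.sqrt 2)⁻¹ : ℝ) : ℂ) = 1 := by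
        rw [← Complex.ofReal_mul, mul_inv_cancel₀ (by positivity), Complex.ofReal_one]
      rw [Matrix.smul_apply, hH2, smul_eq_mul, Complex.ofReal_mul _ (Real.sqrt 2)]
      linear_combination -((((Real.sqrt (2 ^ m))⁻¹ * Real.sqrt (Nat.card S) : ℝ) : ℂ)
        * sgn x (r + ((b.val : ZMod 2) • Δhat + z)) * (-1) ^ (b.val * i.val)) * h2
    have hmain := conjTranspose_mul_sum_proj_mul (Had m * Enc) _ _ _
      (Nat.card (perp (SDelta S Δ))) (fun b => f b = 1)
      (fun w => hphase x w) hcol fun b => card_image_add _ _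
    have hcard := two_mul_card_mul_card_perp_SDelta S hΔ
    have hscal : (Nat.card (perp (SDelta S Δ)) : ℂ)
        * ((((Real.sqrt (2 ^ m))⁻¹ * Real.sqrt (Nat.card S) * Real.sqrt 2 : ℝ) : ℂ)
        * (((Real.sqrt (2 ^ m))⁻¹ * Real.sqrt (Nat.card S) * Real.sqrt 2 : ℝ) : ℂ)) = 1 := by
      have hsq : ((Real.sqrt (2 ^ m))⁻¹ * Real.sqrt (Nat.card S) * Real.sqrt 2)
          * ((Real.sqrt (2 ^ m))⁻¹ * Real.sqrt (Nat.card S) * Real.sqrt 2)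
          = (2 ^ m)⁻¹ * Nat.card S * 2 := by
        rw [mul_mul_mul_comm, mul_mul_mul_comm (Real.sqrt (2 ^ m))⁻¹, ← mul_inv,
          Real.mul_self_sqrt (by positivity), Real.mul_self_sqrt (by positivity),
          Real.mul_self_sqrt (by positivity)]
      rw [← Complex.ofReal_mul, hsq]
      push_cast
      rw [← mul_inv_cancel₀ (pow_ne_zero m (two_ne_zero' ℂ))]
      nth_rewrite 2 [← hcard]
      ring
    have hH2star : H2ᴴ = H2 := by
      ext i j
      rw [Matrix.conjTranspose_apply, hH2, hH2, mul_comm j.val]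
      simp
    rw [if_neg (by decide)] at hD
    rw [← hD, Matrix.conjTranspose_mul, Had_conjTranspose] at hmain
    simp only [Fin.val_one, pow_one]
    rw [Matrix.mul_assoc _ (Had m) Enc, hmain]
    simp only [Matrix.conjTranspose_smul, hH2star, Matrix.smul_mul,
      Matrix.mul_smul, smul_smul, Complex.star_def, Complex.conj_ofReal]
    rw [hscal, one_smul]
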